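/- arXiv:1610.09072 — 6 statements merged into one kernel-verified Lean document; each statement's English description precedes it below -/
import Mathlib

section
/- Let y be uniformly distributed on the unit sphere of ℝ^d, let w = √d·y, and let v ∈ ℝ^d with z = ‖v‖. Then |E[cos(wᵀv)] − (e^{-z²/2} − e^{-z²/2}·z⁴/(4d))| ≤ e^{z²/2}·z⁴·(z⁴ + 8z² + 8)/(16d²). -/
open MeasureTheory ProbabilityTheory Real
open scoped RealInnerProductSpace

lemma hasSum_desc (x : ℝ) (m : ℕ) :
    HasSum (fun k : ℕ => x ^ k / (k.factorial : ℝ) * (k.descFactorial m : ℝ)) (x ^ m * Real.exp x) := by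
  have h := (NormedSpace.expSeries_div_hasSum_exp (𝔸 := ℝ) x).mul_left (x ^ m)
  rw [← Real.exp_eq_exp_ℝ] at h
  have h0 : ∑ i ∈ Finset.range m, x ^ i / (i.factorial : ℝ) * (i.descFactorial m : ℝ) = 0 := by
    apply Finset.sum_eq_zero
    intro i hi
    rw [Nat.descFactorial_of_lt (Finset.mem_range.mp hi)]
    simp
  rw [← hasSum_nat_add_iff' m, h0, sub_zero]
  refine h.congr_fun fun k => ?_
  have h1 := Nat.factorial_mul_descFactorial (Nat.le_add_left m k)
  rw [Nat.add_sub_cancel] at h1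
  have h2 : (k.factorial : ℝ) * ((k + m).descFactorial m : ℝ) = ((k + m).factorial : ℝ) := by
    exact_mod_cast h1
  have h3 : (k.factorial : ℝ) ≠ 0 := by positivity
  have h4 : ((k + m).descFactorial m : ℝ) ≠ 0 := by
    intro h; rw [h, mul_zero] at h2; exact absurd h2.symm (by positivity)
  rw [← h2, pow_add]
  field_simp

lemma desc_sq (k : ℕ) : ((k.descFactorial 2 : ℝ)) ^ 2 =
    k.descFactorial 4 + 4 * k.descFactorial 3 + 2 * k.descFactorial 2 := by
  rcases k with _ | _ | _ | _ | n
  · simp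
  · simp [Nat.descFactorial]
  · norm_num [Nat.descFactorial]
  · norm_num [Nat.descFactorial]
  · have e1 : n + 1 + 1 + 1 + 1 - 1 = n + 3 := by omega
    have e2 : n + 1 + 1 + 1 + 1 - 2 = n + 2 := by omega
    have e3 : n + 1 + 1 + 1 + 1 - 3 = n + 1 := by omega
    simp only [Nat.descFactorial, e1, e2, e3, Nat.sub_zero]
    push_cast; ring

lemma q_bound (d : ℝ) (hd : 0 < d) (q : ℕ → ℝ) (h0 : q 0 = 1)
    (hs : ∀ k : ℕ, q (k + 1) * (d + 2 * k) = q k * d) (k : ℕ) :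
    |q k - 1 + (k.descFactorial 2 : ℝ) / d| ≤ ((k.descFactorial 2 : ℝ) / d) ^ 2 := by
  have key : ∀ k : ℕ, 0 ≤ q k ∧ q k ≤ 1 ∧ 1 - ((k : ℝ) * (k - 1)) / d ≤ q k ∧
      q k * (1 + ((k : ℝ) * (k - 1)) / d) ≤ 1 := by
    intro k
    induction k with
    | zero => simp [h0]
    | succ k ih =>
      obtain ⟨i1, i2, i3, i4⟩ := ih
      have ha : (0 : ℝ) ≤ 2 * k / d := by positivity
      set a : ℝ := 2 * k / d with haa
      have h1 : q (k + 1) * (1 + a) = q k := by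
        have := hs k
        rw [haa]; field_simp; linarith
      have hS : (((k + 1 : ℕ) : ℝ) * (((k + 1 : ℕ) : ℝ) - 1)) / d = (k : ℝ) * (k - 1) / d + a := by
        rw [haa]; push_cast; field_simp; ring
      have hSn : (0 : ℝ) ≤ (k : ℝ) * (k - 1) / d := by
        rw [← Nat.cast_descFactorial_two]; positivity
      rw [hS]
      set S : ℝ := (k : ℝ) * (k - 1) / d
      have p0 : 0 ≤ q (k + 1) := by
        by_contra hneg
        push Not at hneg
        nlinarith
      have p1 : q (k + 1) ≤ q k := by nlinarith
      refine ⟨p0, by linarith, by nlinarith, ?_⟩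
      have : q (k+1) * (1 + (S + a)) ≤ q k * (1 + S) := by
        rw [← h1]; nlinarith [mul_nonneg p0 (mul_nonneg hSn ha)]
      linarith
  obtain ⟨i1, i2, i3, i4⟩ := key k
  rw [← Nat.cast_descFactorial_two] at i3 i4
  have hSn : (0 : ℝ) ≤ (k.descFactorial 2 : ℝ) / d := by positivity
  set S : ℝ := (k.descFactorial 2 : ℝ) / d
  rw [abs_of_nonneg (by linarith)]
  nlinarith

lemma series_bound (d : ℝ) (hd : 0 < d) (q : ℕ → ℝ) (h0 : q 0 = 1)
    (hs : ∀ k : ℕ, q (k + 1) * (d + 2 * k) = q k * d) (x : ℝ) (hx : 0 ≤ x) (I : ℝ)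
    (hI : HasSum (fun k : ℕ => (-x) ^ k / (k.factorial : ℝ) * q k) I) :
    |I - (Real.exp (-x) - x ^ 2 * Real.exp (-x) / d)|
      ≤ (x ^ 4 + 4 * x ^ 3 + 2 * x ^ 2) * Real.exp x / d ^ 2 := by
  have e0 := hasSum_desc (-x) 0
  have e2 := (hasSum_desc (-x) 2).div_const d
  have hE := hI.sub (e0.sub e2)
  have b := ((((hasSum_desc x 4).add ((hasSum_desc x 3).mul_left 4)).add
    ((hasSum_desc x 2).mul_left 2))).div_const (d ^ 2)
  have := tsum_of_norm_bounded b (f := fun k : ℕ => (-x) ^ k / (k.factorial : ℝ) * q k -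
    ((-x) ^ k / (k.factorial : ℝ) * (k.descFactorial 0 : ℝ) -
      (-x) ^ k / (k.factorial : ℝ) * (k.descFactorial 2 : ℝ) / d)) ?_
  · rw [hE.tsum_eq] at this
    convert this using 1
    · rw [Real.norm_eq_abs]; congr 1; ring
    · ring
  · intro k
    have hq := q_bound d hd q h0 hs k
    have e1 : (-x) ^ k / (k.factorial : ℝ) * q k -
    ((-x) ^ k / (k.factorial : ℝ) * (k.descFactorial 0 : ℝ) -
      (-x) ^ k / (k.factorial : ℝ) * (k.descFactorial 2 : ℝ) / d)
      = (-x) ^ k / (k.factorial : ℝ) * (q k - 1 + (k.descFactorial 2 : ℝ) / d) := by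
      simp only [Nat.descFactorial_zero]; push_cast; ring
    have e3 : (x ^ k / (k.factorial : ℝ) * (k.descFactorial 4 : ℝ) + 4 * (x ^ k / (k.factorial : ℝ) * (k.descFactorial 3 : ℝ)) + 2 * (x ^ k / (k.factorial : ℝ) * (k.descFactorial 2 : ℝ))) / d ^ 2
      = x ^ k / (k.factorial : ℝ) * ((k.descFactorial 2 : ℝ) / d) ^ 2 := by
      rw [div_pow, desc_sq]; ring
    rw [e1, e3, Real.norm_eq_abs, abs_mul, abs_div, abs_pow, abs_neg, abs_of_nonneg hx, Nat.abs_cast]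
    gcongr

section sph
variable {d : ℕ} {μ : Measure (EuclideanSpace ℝ (Fin d))}

lemma sph_inv
    (hrot : ∀ T : EuclideanSpace ℝ (Fin d) ≃ₗᵢ[ℝ] EuclideanSpace ℝ (Fin d), μ.map T = μ)
    (F : ℝ → ℝ) {u w : EuclideanSpace ℝ (Fin d)} (h : ‖u‖ = ‖w‖) :
    ∫ y, F ⟪y, u⟫ ∂μ = ∫ y, F ⟪y, w⟫ ∂μ := by
  set T := (ℝ ∙ (u - w))ᗮ.reflection
  have hT : T u = w := Submodule.reflection_sub h
  conv_rhs => rw [← hrot T]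
  have := T.toHomeomorph.measurableEmbedding.integral_map (μ := μ) (fun y => F ⟪y, w⟫)
  refine Eq.trans ?_ this.symm
  congr 1
  ext y
  congr 1
  rw [← hT]
  exact (T.inner_map_map y u).symm

lemma sph_coord (hsph : ∀ᵐ u ∂μ, ‖u‖ = 1) (i : Fin d) : ∀ᵐ y ∂μ, |y i| ≤ 1 := by
  filter_upwards [hsph] with y hy
  rw [← hy]
  exact PiLp.norm_apply_le y i

lemma sph_int [IsProbabilityMeasure μ] (hsph : ∀ᵐ u ∂μ, ‖u‖ = 1) (i j : Fin d) (a b : ℕ) :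
    Integrable (fun y : EuclideanSpace ℝ (Fin d) => y i ^ a * y j ^ b) μ := by
  refine Integrable.of_bound (Continuous.aestronglyMeasurable (by fun_prop)) 1 ?_
  filter_upwards [sph_coord hsph i, sph_coord hsph j] with y h1 h2
  rw [Real.norm_eq_abs, abs_mul, abs_pow, abs_pow]
  exact mul_le_one₀ (pow_le_one₀ (abs_nonneg _) h1) (by positivity) (pow_le_one₀ (abs_nonneg _) h2)

lemma sph_mixed [IsProbabilityMeasure μ] (hsph : ∀ᵐ u ∂μ, ‖u‖ = 1)
    (hrot : ∀ T : EuclideanSpace ℝ (Fin d) ≃ₗᵢ[ℝ] EuclideanSpace ℝ (Fin d), μ.map T = μ)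
    (i j : Fin d) (hij : i ≠ j) (k : ℕ) :
    (2 * k + 1) * ∫ y, y i ^ (2 * k) * y j ^ 2 ∂μ = ∫ y, y i ^ (2 * k + 2) ∂μ := by
  set c : ℕ → ℝ := fun n => ∫ y, y i ^ (2 * k + 2 - n) * y j ^ n ∂μ with hc
  have hpt : ∀ t : ℝ, ∑ n ∈ Finset.range (2 * k + 2 + 1), t ^ n * ((2 * k + 2).choose n * c n) =
      (1 + t ^ 2) ^ (k + 1) * ∫ y, y i ^ (2 * k + 2) ∂μ := by
    intro t
    set e := EuclideanSpace.single i (1 : ℝ) with he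
    set f := EuclideanSpace.single j (1 : ℝ) with hf
    have horth : ⟪e, t • f⟫ = 0 := by
      simp [he, hf, inner_smul_right, EuclideanSpace.inner_single_right, hij.symm]
    have hn : ‖e + t • f‖ ^ 2 = 1 + t ^ 2 := by
      rw [sq, norm_add_sq_eq_norm_sq_add_norm_sq_real horth]
      simp [he, hf, norm_smul]; ring
    have hnn : ‖e + t • f‖ = ‖(√(1 + t ^ 2)) • e‖ := by
      rw [norm_smul, Real.norm_eq_abs, abs_of_nonneg (Real.sqrt_nonneg _), ← hn,
        Real.sqrt_sq (norm_nonneg _)]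
      simp [he]
    have := sph_inv hrot (fun s => s ^ (2 * k + 2)) hnn
    simp only [inner_add_right, inner_smul_right, he, hf, EuclideanSpace.inner_single_right,
      one_mul, conj_trivial] at this
    have hL : ∫ y : EuclideanSpace ℝ (Fin d), (y i + t * y j) ^ (2 * k + 2) ∂μ =
        ∑ n ∈ Finset.range (2 * k + 2 + 1), t ^ n * ((2 * k + 2).choose n * c n) := by
      have : ∀ y : EuclideanSpace ℝ (Fin d), (y i + t * y j) ^ (2 * k + 2) =
          ∑ n ∈ Finset.range (2 * k + 2 + 1),
            (t ^ n * (2 * k + 2).choose n) * (y i ^ (2 * k + 2 - n) * y j ^ n) := by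
        intro y
        rw [add_comm, add_pow]
        refine Finset.sum_congr rfl fun n _ => ?_
        rw [mul_pow]; ring
      simp_rw [this]
      rw [integral_finsetSum _ (fun n _ => (sph_int hsph i j _ _).const_mul _)]
      refine Finset.sum_congr rfl fun n _ => ?_
      rw [integral_const_mul, mul_assoc]
    rw [← hL, this]
    simp_rw [mul_pow]
    rw [integral_const_mul]
    congr 1
    rw [show 2 * k + 2 = 2 * (k + 1) by ring, pow_mul, Real.sq_sqrt (by positivity)]
  set m := ∫ y, y i ^ (2 * k + 2) ∂μ with hm
  have hpoly : (∑ n ∈ Finset.range (2 * k + 2 + 1),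
      Polynomial.C ((2 * k + 2).choose n * c n) * Polynomial.X ^ n : Polynomial ℝ) =
      Polynomial.expand ℝ 2 ((1 + Polynomial.X) ^ (k + 1)) * Polynomial.C m := by
    apply Polynomial.funext
    intro t
    rw [Polynomial.eval_finsetSum, Polynomial.eval_mul, Polynomial.expand_eval]
    simp only [Polynomial.eval_mul, Polynomial.eval_C, Polynomial.eval_pow, Polynomial.eval_X,
      Polynomial.eval_add, Polynomial.eval_one]
    rw [← hpt t]
    exact Finset.sum_congr rfl fun n _ => mul_comm _ _
  have h2 := congrArg (fun p => Polynomial.coeff p 2) hpoly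
  simp only [Polynomial.finsetSum_coeff, Polynomial.coeff_C_mul, Polynomial.coeff_X_pow,
    Polynomial.coeff_mul_C, Polynomial.coeff_expand (by norm_num : 0 < 2)] at h2
  rw [Finset.sum_eq_single 2 (by intro b _ hb; simp [hb.symm])
    (by intro h; exact absurd (Finset.mem_range.mpr (by omega)) h)] at h2
  rw [if_pos (dvd_refl 2), Polynomial.coeff_one_add_X_pow, Nat.cast_choose_two] at h2
  simp [hc] at h2
  have hk : (k : ℝ) + 1 ≠ 0 := by positivity
  apply mul_left_cancel₀ hk
  rw [← h2]
  ring

lemma sph_rec [IsProbabilityMeasure μ] (hsph : ∀ᵐ u ∂μ, ‖u‖ = 1)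
    (hrot : ∀ T : EuclideanSpace ℝ (Fin d) ≃ₗᵢ[ℝ] EuclideanSpace ℝ (Fin d), μ.map T = μ)
    (i : Fin d) (k : ℕ) :
    (∫ y, y i ^ (2 * k + 2) ∂μ) * (d + 2 * k) = (2 * k + 1) * ∫ y, y i ^ (2 * k) ∂μ := by
  have h1 : ∫ y, y i ^ (2 * k) ∂μ = ∑ j, ∫ y, y i ^ (2 * k) * y j ^ 2 ∂μ := by
    rw [← integral_finsetSum _ (fun j _ => sph_int hsph i j _ _)]
    apply integral_congr_ae
    filter_upwards [hsph] with y hy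
    have := EuclideanSpace.norm_sq_eq y
    simp only [hy, Real.norm_eq_abs, sq_abs] at this
    rw [← Finset.mul_sum, ← this]; ring
  rw [h1, Finset.mul_sum, ← Finset.add_sum_erase _ _ (Finset.mem_univ i)]
  rw [Finset.sum_congr rfl (fun j hj => sph_mixed hsph hrot i j (Finset.ne_of_mem_erase hj).symm k)]
  rw [Finset.sum_const, Finset.card_erase_of_mem (Finset.mem_univ i), Finset.card_univ,
    Fintype.card_fin, nsmul_eq_mul, Nat.cast_sub (by have := i.pos; omega)]
  simp_rw [← pow_add]
  push_cast; ring

lemma sph_hasSum [IsProbabilityMeasure μ] (hsph : ∀ᵐ u ∂μ, ‖u‖ = 1) (i : Fin d) (r : ℝ) :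
    HasSum (fun k : ℕ => (-1) ^ k * r ^ (2 * k) / ((2 * k).factorial : ℝ) * ∫ y, y i ^ (2 * k) ∂μ)
      (∫ y, Real.cos (r * y i) ∂μ) := by
  simp_rw [← integral_const_mul]
  have hsum : Summable (fun k : ℕ => |r| ^ (2 * k) / ((2 * k).factorial : ℝ)) :=
    (Real.summable_pow_div_factorial |r|).comp_injective (i := fun k : ℕ => 2 * k)
      (fun a b h => by simpa using h)
  refine hasSum_integral_of_dominated_convergence
    (fun k _ => |r| ^ (2 * k) / ((2 * k).factorial : ℝ)) ?_ ?_ ?_ ?_ ?_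
  · intro k
    exact Continuous.aestronglyMeasurable (by fun_prop)
  · intro k
    filter_upwards [sph_coord hsph i] with y hy
    rw [Real.norm_eq_abs, abs_mul, abs_div, abs_mul, abs_pow, abs_pow, abs_pow, Nat.abs_cast, abs_neg,
      abs_one, one_pow, one_mul]
    exact mul_le_of_le_one_right (by positivity) (pow_le_one₀ (abs_nonneg _) hy)
  · exact Filter.Eventually.of_forall fun _ => hsum
  · exact integrable_const _
  · refine Filter.Eventually.of_forall fun y => ?_
    have := Real.hasSum_cos (r * y i)
    refine this.congr_fun fun k => ?_
    rw [mul_pow]; ring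

end sph

/-- if `y` is uniformly distributed on the unit sphere of `ℝ^d` (a probability
measure supported on the sphere and invariant under all rotations), `w = √d·y`, and
`v ∈ ℝ^d` with `z = ‖v‖`, then
`|E[cos(wᵀv)] − (e^{-z²/2} − e^{-z²/2}·z⁴/(4d))| ≤ e^{z²/2}·z⁴·(z⁴+8z²+8)/(16d²)`. -/
theorem stmt_6 (d : ℕ) (μ : Measure (EuclideanSpace ℝ (Fin d)))
    (hprob : IsProbabilityMeasure μ) (hsph : ∀ᵐ u ∂μ, ‖u‖ = 1)
    (hrot : ∀ T : EuclideanSpace ℝ (Fin d) ≃ₗᵢ[ℝ] EuclideanSpace ℝ (Fin d), μ.map T = μ)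
    (v : EuclideanSpace ℝ (Fin d)) :
    |(∫ y, Real.cos ⟪Real.sqrt d • y, v⟫ ∂μ)
        - (Real.exp (-‖v‖ ^ 2 / 2) - Real.exp (-‖v‖ ^ 2 / 2) * ‖v‖ ^ 4 / (4 * d))|
      ≤ Real.exp (‖v‖ ^ 2 / 2) * ‖v‖ ^ 4 * (‖v‖ ^ 4 + 8 * ‖v‖ ^ 2 + 8) / (16 * d ^ 2) := by
  rcases Nat.eq_zero_or_pos d with hd | hd
  · subst hd
    obtain ⟨u, hu⟩ := hsph.exists
    rw [Subsingleton.elim u 0, norm_zero] at hu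
    exact absurd hu (by norm_num)
  have hd' : (0 : ℝ) < d := by exact_mod_cast hd
  set i : Fin d := ⟨0, hd⟩
  set z := ‖v‖ with hz
  have hz0 : 0 ≤ z := norm_nonneg v
  have hI : ∫ y, Real.cos ⟪Real.sqrt d • y, v⟫ ∂μ =
      ∫ y : EuclideanSpace ℝ (Fin d), Real.cos ((√d * z) * y i) ∂μ := by
    have hn : ‖v‖ = ‖z • EuclideanSpace.single i (1 : ℝ)‖ := by
      simp [norm_smul, hz]
    have := sph_inv hrot (fun s => Real.cos (√d * s)) hn
    simp only [inner_smul_right, EuclideanSpace.inner_single_right, one_mul, conj_trivial] at this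
    simp only [real_inner_smul_left, mul_assoc]
    exact this
  set q : ℕ → ℝ := fun k => (∫ y, y i ^ (2 * k) ∂μ) * d ^ k * 2 ^ k * k.factorial /
    ((2 * k).factorial : ℝ) with hq
  have hS := sph_hasSum hsph i (√d * z)
  rw [← hI] at hS
  have key := series_bound d hd' q (by simp [hq]) ?_ (z ^ 2 / 2) (by positivity)
    (∫ y, Real.cos ⟪Real.sqrt d • y, v⟫ ∂μ) ?_
  · rw [neg_div]
    convert key using 1
    · congr 2; ring
    · field_simp; ring
  · intro k
    have hr := sph_rec hsph hrot i k
    simp only [hq]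
    rw [show 2 * (k + 1) = 2 * k + 1 + 1 by ring, Nat.factorial_succ (2 * k + 1), Nat.factorial_succ (2 * k),
      Nat.factorial_succ k]
    rw [show 2 * k + 2 = 2 * k + 1 + 1 by ring] at hr
    have hk : (2 * (k : ℝ) + 1) ≠ 0 := by positivity
    have hA : ∫ y, y i ^ (2 * k) ∂μ =
      (∫ y, y i ^ (2 * k + 1 + 1) ∂μ) * (d + 2 * k) / (2 * k + 1) := by
      rw [hr]; field_simp
    rw [hA]
    push_cast
    have : (2 * (k : ℝ) + 1 + 1) ≠ 0 := by positivity
    field_simp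
    ring
  · convert hS using 2 with k
    simp only [hq]
    have : (√d * z) ^ (2 * k) = d ^ k * (z ^ 2) ^ k := by
      rw [mul_pow, pow_mul, pow_mul, Real.sq_sqrt hd'.le]
    rw [this, show -(z ^ 2 / 2) = (-1) * z ^ 2 / 2 by ring, div_pow, mul_pow]
    field_simp
end

section
/- Let α_1,…,α_k be nonnegative real numbers. Then |1/∏_{i=1}^k (1+α_i) − (1 − Σ_{i=1}^k α_i)| ≤ (Σ_{i=1}^k α_i)². -/
theorem aux_sum_le_prod {ι : Type*} (s : Finset ι) (f : ι → ℝ) (hf : ∀ i, 0 ≤ f i) :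
    1 + ∑ i ∈ s, f i ≤ ∏ i ∈ s, (1 + f i) := by
  classical
  induction s using Finset.induction_on with
  | empty => simp
  | insert a s ha ih =>
    rw [Finset.sum_insert ha, Finset.prod_insert ha]
    have h1 := hf a
    have h2 : 0 ≤ ∑ i ∈ s, f i := Finset.sum_nonneg fun i _ => hf i
    nlinarith [mul_le_mul_of_nonneg_left ih (by linarith : 0 ≤ 1 + f a), mul_nonneg h1 h2]

/-- for nonnegative reals `α₁,…,α_k`,
`|1/∏ᵢ(1+αᵢ) − (1 − Σᵢ αᵢ)| ≤ (Σᵢ αᵢ)²`. -/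
theorem stmt_9 (k : ℕ) (α : Fin k → ℝ) (hα : ∀ i, 0 ≤ α i) :
    |1 / ∏ i, (1 + α i) - (1 - ∑ i, α i)| ≤ (∑ i, α i) ^ 2 := by
  have hS : 0 ≤ ∑ i, α i := Finset.sum_nonneg fun i _ => hα i
  have hP := aux_sum_le_prod Finset.univ α hα
  have hE : ∏ i, (1 + α i) ≤ Real.exp (∑ i, α i) := by
    rw [Real.exp_sum]
    refine Finset.prod_le_prod (fun i _ => by linarith [hα i]) (fun i _ => ?_)
    linarith [Real.add_one_le_exp (α i)]
  generalize ∏ i, (1 + α i) = P at *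
  generalize ∑ i, α i = S at *
  have hPpos : 0 < P := by linarith
  have hlow : 1 - S ≤ 1 / P := by
    have h1 := Real.add_one_le_exp (-S)
    rw [Real.exp_neg, ← one_div] at h1
    have h2 := one_div_le_one_div_of_le hPpos hE
    linarith
  have hup : 1 / P ≤ 1 - S + S ^ 2 := by
    rw [div_le_iff₀ hPpos]
    have h0 : 0 ≤ 1 - S + S ^ 2 := by nlinarith [sq_nonneg (S - 1)]
    nlinarith [mul_le_mul_of_nonneg_left hP h0, pow_nonneg hS 3]
  rw [abs_le]
  constructor <;> nlinarith [sq_nonneg S]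
end

section
/- Let α_1,…,α_k and β_1,…,β_k be nonnegative real numbers with β_i ≤ α_i for all i. Then |∏_{i=1}^k (1+β_i)/(1+α_i) − (1 + Σ_{i=1}^k β_i − Σ_{i=1}^k α_i)| ≤ (Σ_{i=1}^k (α_i − β_i))² + Σ_{i=1}^k (α_i − β_i)·β_i. -/
theorem stmt_10_aux {ι : Type*} (s : Finset ι) (α β : ι → ℝ) (hβ : ∀ i, 0 ≤ β i)
    (hβα : ∀ i, β i ≤ α i) :
    0 ≤ ∑ i ∈ s, (α i - β i) ∧ (∏ i ∈ s, (1 + β i) / (1 + α i)) ≤ 1 ∧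
    1 - ∑ i ∈ s, (α i - β i) ≤ (∏ i ∈ s, (1 + β i) / (1 + α i)) ∧
    (∏ i ∈ s, (1 + β i) / (1 + α i)) - (1 - ∑ i ∈ s, (α i - β i))
      ≤ (∑ i ∈ s, (α i - β i)) ^ 2 + ∑ i ∈ s, (α i - β i) * β i := by
  classical
  induction s using Finset.induction_on with
  | empty => simp
  | insert a s ha ih =>
    have hP : 0 ≤ ∏ i ∈ s, (1 + β i) / (1 + α i) :=
      Finset.prod_nonneg fun i _ => div_nonneg (by linarith [hβ i]) (by linarith [hβ i, hβα i])
    rw [Finset.prod_insert ha, Finset.sum_insert ha, Finset.sum_insert ha]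
    generalize (∏ i ∈ s, (1 + β i) / (1 + α i)) = P at *
    generalize (∑ i ∈ s, (α i - β i)) = D at *
    generalize (∑ i ∈ s, (α i - β i) * β i) = E at *
    obtain ⟨hD, hP1, hl, hu⟩ := ih
    have hb := hβ a
    have hba := hβα a
    generalize α a = x at *
    generalize β a = y at *
    have hx : 0 < 1 + x := by linarith
    obtain ⟨z, hz⟩ : ∃ z, z = (x - y) / (1 + x) := ⟨_, rfl⟩
    have hr : (1 + y) / (1 + x) = 1 - z := by rw [hz]; field_simp; ring
    have hzx : z * (1 + x) = x - y := by rw [hz]; field_simp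
    have hz0 : 0 ≤ z := by rw [hz]; exact div_nonneg (by linarith) hx.le
    have hzd : z ≤ x - y := by nlinarith
    rw [hr]
    have h1 : z * P ≤ z := by nlinarith
    have h2 : 0 ≤ z * P := by positivity
    have h3 : z * (1 - D) ≤ z * P := mul_le_mul_of_nonneg_left hl hz0
    have h4 : z * D ≤ (x - y) * D := mul_le_mul_of_nonneg_right hzd hD
    have h5 : z * x ≤ (x - y) * x := mul_le_mul_of_nonneg_right hzd (by linarith)
    have h6 : 0 ≤ (x - y) * D := mul_nonneg (by linarith) hD
    refine ⟨by linarith, by linarith, by linarith, by nlinarith⟩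

/-- for nonnegative reals `α₁,…,α_k` and `β₁,…,β_k` with `βᵢ ≤ αᵢ` for all `i`,
`|∏ᵢ (1+βᵢ)/(1+αᵢ) − (1 + Σᵢ βᵢ − Σᵢ αᵢ)| ≤ (Σᵢ (αᵢ − βᵢ))² + Σᵢ (αᵢ − βᵢ)·βᵢ`. -/
theorem stmt_10 (k : ℕ) (α β : Fin k → ℝ) (hβ : ∀ i, 0 ≤ β i) (hβα : ∀ i, β i ≤ α i) :
    |(∏ i, (1 + β i) / (1 + α i)) - (1 + ∑ i, β i - ∑ i, α i)|
      ≤ (∑ i, (α i - β i)) ^ 2 + ∑ i, (α i - β i) * β i := by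
  obtain ⟨-, -, hl, hu⟩ := stmt_10_aux Finset.univ α β hβ hβα
  have h : (1 + ∑ i, β i - ∑ i, α i) = 1 - ∑ i, (α i - β i) := by
    rw [Finset.sum_sub_distrib]; ring
  rw [h, abs_of_nonneg (by linarith)]
  exact hu
end

section
/- Let x ∈ ℝ^d be nonzero, let z' be a real Gaussian random variable with mean 0 and variance ‖x‖₂², and let y' = Σ_{i=1}^d x(i)·d_i where d_1,…,d_d are i.i.d. Rademacher random variables (±1 with probability 1/2 each). Then for every differentiable function g : ℝ → ℝ with |g(t)| ≤ 1 and |g'(t)| ≤ 1 for all t, one has |E[g(z')] − E[g(y')]| ≤ (3/2)·Σ_{i=1}^d |x(i)|³/‖x‖₂². -/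
open MeasureTheory ProbabilityTheory Real

/-- The Rademacher distribution on `ℝ`: `±1` each with probability `1/2`. -/
noncomputable def rademacher : Measure ℝ :=
  (2 : ENNReal)⁻¹ • Measure.dirac 1 + (2 : ENNReal)⁻¹ • Measure.dirac (-1)

/-- Unnormalised Gaussian density. -/
noncomputable def gE (t : ℝ) : ℝ := rexp (-(1/2) * t ^ 2)

lemma gE_pos (t : ℝ) : 0 < gE t := Real.exp_pos _

lemma gE_neg (t : ℝ) : gE (-t) = gE t := by simp [gE]

lemma gE_cont : Continuous gE := by unfold gE; fun_prop

lemma gE_int : Integrable gE := integrable_exp_neg_mul_sq (by norm_num)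

lemma gE_int' : Integrable (fun t => t * gE t) := integrable_mul_exp_neg_mul_sq (by norm_num)

lemma gE_deriv (t : ℝ) : HasDerivAt gE (-t * gE t) t := by
  have h : HasDerivAt (fun t : ℝ => -(1/2) * t ^ 2) (-t) t := by
    refine ((hasDerivAt_pow 2 t).const_mul (-(1/2) : ℝ)).congr_deriv ?_
    norm_num
    ring
  refine h.exp.congr_deriv ?_
  unfold gE; ring

lemma gE_top : Filter.Tendsto gE Filter.atTop (nhds 0) := by
  have : Filter.Tendsto (fun t : ℝ => (1/2) * t ^ 2) Filter.atTop Filter.atTop :=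
    (Filter.tendsto_pow_atTop (by norm_num)).const_mul_atTop (by norm_num)
  have h2 := Real.tendsto_exp_neg_atTop_nhds_zero.comp this
  refine h2.congr fun t => ?_
  simp [gE]

lemma gE_bot : Filter.Tendsto gE Filter.atBot (nhds 0) := by
  refine (gE_top.comp Filter.tendsto_neg_atBot_atTop).congr fun t => ?_
  simp [gE_neg]

lemma mills (w : ℝ) : w / (1 + w ^ 2) * gE w ≤ ∫ t in Set.Ioi w, gE t := by
  have hpos : ∀ t : ℝ, 0 < 1 + t ^ 2 := fun t => by positivity
  have hd : ∀ t : ℝ, HasDerivAt (fun t => -(t / (1 + t ^ 2) * gE t))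
      ((1 - 2 / (1 + t ^ 2) ^ 2) * gE t) t := by
    intro t
    have h1 : HasDerivAt (fun t : ℝ => 1 + t ^ 2) (2 * t) t := by
      simpa using (hasDerivAt_pow 2 t).const_add 1
    have h := ((((hasDerivAt_id t).div h1 (hpos t).ne').mul (gE_deriv t))).neg
    refine h.congr_deriv ?_
    have := (hpos t).ne'
    simp only [id, Pi.div_apply]
    field_simp
    ring
  have hb : ∀ t : ℝ, 0 ≤ 2 / (1 + t ^ 2) ^ 2 ∧ 2 / (1 + t ^ 2) ^ 2 ≤ 2 := by
    intro t
    refine ⟨by positivity, ?_⟩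
    rw [div_le_iff₀ (by positivity)]
    nlinarith [sq_nonneg t, sq_nonneg (t^2)]
  have hi : Integrable (fun t => (1 - 2 / (1 + t ^ 2) ^ 2) * gE t) := by
    refine gE_int.bdd_mul (c := 1) ?_ (Filter.Eventually.of_forall fun t => ?_)
    · exact Measurable.aestronglyMeasurable (by fun_prop)
    · rw [Real.norm_eq_abs, abs_le]
      constructor <;> linarith [(hb t).1, (hb t).2]
  have ht : Filter.Tendsto (fun t => -(t / (1 + t ^ 2) * gE t)) Filter.atTop (nhds 0) := by
    refine squeeze_zero_norm (fun t => ?_) gE_top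
    rw [norm_neg, norm_mul, Real.norm_eq_abs, Real.norm_eq_abs, abs_of_pos (gE_pos t)]
    refine mul_le_of_le_one_left (gE_pos t).le ?_
    rw [abs_div, abs_of_pos (hpos t), div_le_one (hpos t)]
    nlinarith [sq_abs t, sq_nonneg (|t| - 1), abs_nonneg t]
  have key := integral_Ioi_of_hasDerivAt_of_tendsto (a := w)
    (hd w).continuousAt.continuousWithinAt (fun t _ => hd t) hi.integrableOn ht
  have : ∫ t in Set.Ioi w, (1 - 2 / (1 + t ^ 2) ^ 2) * gE t ≤ ∫ t in Set.Ioi w, gE t :=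
    setIntegral_mono_on hi.integrableOn gE_int.integrableOn measurableSet_Ioi fun t _ => by
      nlinarith [(hb t).1, gE_pos t]
  linarith

lemma mills' (w : ℝ) : -w / (1 + w ^ 2) * gE w ≤ ∫ t in Set.Iic w, gE t := by
  have h := mills (-w)
  rw [← integral_comp_neg_Iic w gE] at h
  simpa [gE_neg] using h

lemma mono_le (k : ℝ → ℝ) (hk : Monotone k) (hi : Integrable (fun t => k t * gE t))
    (h0 : ∫ t, k t * gE t = 0) (w : ℝ) :
    (1 + w ^ 2) * (∫ t in Set.Iic w, k t * gE t) + w * k w * gE w ≤ 0 := by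
  have hs := intervalIntegral.integral_Iic_add_Ioi (b := w) hi.integrableOn hi.integrableOn
  rw [h0] at hs
  have hl : ∫ t in Set.Iic w, k t * gE t ≤ k w * ∫ t in Set.Iic w, gE t := by
    rw [← integral_const_mul]
    exact setIntegral_mono_on hi.integrableOn (gE_int.const_mul _).integrableOn measurableSet_Iic
      fun t ht => mul_le_mul_of_nonneg_right (hk ht) (gE_pos t).le
  have hr : k w * ∫ t in Set.Ioi w, gE t ≤ ∫ t in Set.Ioi w, k t * gE t := by
    rw [← integral_const_mul]
    exact setIntegral_mono_on (gE_int.const_mul _).integrableOn hi.integrableOn measurableSet_Ioi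
      fun t ht => mul_le_mul_of_nonneg_right (hk (le_of_lt ht)) (gE_pos t).le
  have m1 := mills w
  have m2 := mills' w
  have hp : 0 < 1 + w ^ 2 := by positivity
  rw [div_mul_eq_mul_div, div_le_iff₀ hp] at m1 m2
  have g0 := gE_pos w
  have p1 : 0 ≤ ∫ t in Set.Ioi w, gE t := setIntegral_nonneg measurableSet_Ioi fun t _ => (gE_pos t).le
  have p2 : 0 ≤ ∫ t in Set.Iic w, gE t := setIntegral_nonneg measurableSet_Iic fun t _ => (gE_pos t).le
  generalize (∫ t in Set.Iic w, k t * gE t) = A at *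
  generalize (∫ t in Set.Ioi w, k t * gE t) = B at *
  generalize (∫ t in Set.Ioi w, gE t) = C at *
  generalize (∫ t in Set.Iic w, gE t) = D at *
  rcases le_total 0 (k w) with hk0 | hk0
  · have hA : A ≤ -(k w * C) := by linarith
    have := mul_le_mul_of_nonneg_left hA hp.le
    have := mul_le_mul_of_nonneg_left m1 hk0
    nlinarith
  · have := mul_le_mul_of_nonneg_left hl hp.le
    have := mul_le_mul_of_nonneg_left m2 (neg_nonneg.2 hk0)
    nlinarith

lemma id_int (w : ℝ) : ∫ t in Set.Iic w, t * gE t = - gE w := by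
  have key := integral_Iic_of_hasDerivAt_of_tendsto (a := w) (f := fun t => - gE t)
    (f' := fun t => t * gE t)
    gE_cont.neg.continuousAt.continuousWithinAt
    (fun t _ => (gE_deriv t).neg.congr_deriv (by ring)) gE_int'.integrableOn (by simpa using gE_bot.neg)
  simpa using key

lemma id_int0 : ∫ t, t * gE t = 0 := by
  have h := integral_neg_eq_self (fun t => t * gE t) volume
  simp only [gE_neg, neg_mul, integral_neg] at h
  linarith

lemma lip_le (k : ℝ → ℝ) (hd : Differentiable ℝ k) (hk : ∀ t, |deriv k t| ≤ 1)
    (hi : Integrable (fun t => k t * gE t))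
    (h0 : ∫ t, k t * gE t = 0) (w : ℝ) :
    |(1 + w ^ 2) * (∫ t in Set.Iic w, k t * gE t) + w * k w * gE w| ≤ gE w := by
  have h1 := mono_le (fun t => t + k t)
    (monotone_of_deriv_nonneg (by fun_prop) fun t => by
      rw [((hasDerivAt_id' t).fun_add (hd t).hasDerivAt).deriv]; linarith [(abs_le.1 (hk t)).1])
    (by simp only [add_mul]; exact gE_int'.add hi)
    (by simp only [add_mul]; rw [integral_add gE_int' hi, h0, id_int0, add_zero]) w
  have h2 := mono_le (fun t => t - k t)
    (monotone_of_deriv_nonneg (by fun_prop) fun t => by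
      rw [((hasDerivAt_id' t).fun_sub (hd t).hasDerivAt).deriv]; linarith [(abs_le.1 (hk t)).2])
    (by simp only [sub_mul]; exact gE_int'.sub hi)
    (by simp only [sub_mul]; rw [integral_sub gE_int' hi, h0, id_int0, sub_zero]) w
  simp only [add_mul _ _ (gE _)] at h1
  simp only [sub_mul _ _ (gE _)] at h2
  rw [integral_add gE_int'.integrableOn hi.integrableOn, id_int] at h1
  rw [integral_sub gE_int'.integrableOn hi.integrableOn, id_int] at h2
  rw [abs_le]
  constructor <;> nlinarith

/-- Existence of a good solution of Stein's equation. -/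
lemma stein_exists (k : ℝ → ℝ) (hd : Differentiable ℝ k) (hk : ∀ t, |deriv k t| ≤ 1)
    (hi : Integrable (fun t => k t * gE t)) (h0 : ∫ t, k t * gE t = 0) :
    ∃ f f1 f2 : ℝ → ℝ, (∀ w, HasDerivAt f (f1 w) w) ∧ (∀ w, HasDerivAt f1 (f2 w) w) ∧
      (∀ w, |f2 w| ≤ 2) ∧ ∀ w, k w = f1 w - w * f w := by
  set A : ℝ → ℝ := fun w => ∫ t in Set.Iic w, k t * gE t with hA
  have hc : Continuous (fun t => k t * gE t) := hd.continuous.mul gE_cont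
  have hAd : ∀ w, HasDerivAt A (k w * gE w) w := by
    intro w
    have e : A = fun u => A 0 + ∫ t in (0:ℝ)..u, k t * gE t := by
      funext u
      rw [← intervalIntegral.integral_Iic_sub_Iic hi.integrableOn hi.integrableOn]
      simp [hA]
    rw [e]
    exact (intervalIntegral.integral_hasDerivAt_right (hc.intervalIntegrable _ _)
      (hc.stronglyMeasurableAtFilter _ _) hc.continuousAt).const_add _
  have hinv : ∀ w, HasDerivAt (fun w => (gE w)⁻¹) (w * (gE w)⁻¹) w := by
    intro w
    refine ((gE_deriv w).inv (gE_pos w).ne').congr_deriv ?_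
    have := (gE_pos w).ne'
    field_simp
  have hf : ∀ w, HasDerivAt (fun w => (gE w)⁻¹ * A w) (w * ((gE w)⁻¹ * A w) + k w) w := by
    intro w
    refine ((hinv w).mul (hAd w)).congr_deriv ?_
    have := (gE_pos w).ne'
    field_simp
  refine ⟨fun w => (gE w)⁻¹ * A w, fun w => w * ((gE w)⁻¹ * A w) + k w,
    fun w => (1 + w ^ 2) * ((gE w)⁻¹ * A w) + w * k w + deriv k w, hf, ?_, ?_, ?_⟩
  · intro w
    refine (((hasDerivAt_id' w).mul (hf w)).add (hd w).hasDerivAt).congr_deriv ?_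
    ring
  · intro w
    have h := lip_le k hd hk hi h0 w
    have e : (1 + w ^ 2) * ((gE w)⁻¹ * A w) + w * k w
       = (gE w)⁻¹ * ((1 + w ^ 2) * A w + w * k w * gE w) := by
      have := (gE_pos w).ne'
      field_simp
    have h2 : |(1 + w ^ 2) * ((gE w)⁻¹ * A w) + w * k w| ≤ 1 := by
      rw [e, abs_mul, abs_of_pos (inv_pos.2 (gE_pos w)), inv_mul_le_iff₀ (gE_pos w), mul_one]
      exact h
    exact (abs_add_le _ _).trans (by linarith [hk w])
  · intro w; ring

lemma trap_nonneg (f f1 f2 : ℝ → ℝ) (hf : ∀ w, HasDerivAt f (f1 w) w)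
    (hf1 : ∀ w, HasDerivAt f1 (f2 w) w) (hf2 : ∀ w, |f2 w| ≤ 2) (p b : ℝ) (hb : 0 ≤ b) :
    |f (p + b) - f (p - b) - b * (f1 (p + b) + f1 (p - b))| ≤ 2 * b ^ 2 := by
  set φ : ℝ → ℝ := fun s => f (p + s) - f (p - s) - s * (f1 (p + s) + f1 (p - s)) with hφ
  have hφd : ∀ s, HasDerivAt φ (- (s * (f2 (p + s) - f2 (p - s)))) s := by
    intro s
    have a1 := (hf (p + s)).comp_const_add p s
    have a2 := (hf (p - s)).comp_const_sub p s
    have a3 := (hf1 (p + s)).comp_const_add p s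
    have a4 := (hf1 (p - s)).comp_const_sub p s
    refine ((a1.sub a2).sub ((hasDerivAt_id' s).mul (a3.add a4))).congr_deriv ?_
    simp only [Pi.add_apply]
    ring
  have hsq : ∀ s : ℝ, HasDerivAt (fun s : ℝ => 2 * s ^ 2) (4 * s) s := by
    intro s
    refine ((hasDerivAt_pow 2 s).const_mul (2:ℝ)).congr_deriv ?_
    norm_num; ring
  have hbd : ∀ s, |f2 (p + s) - f2 (p - s)| ≤ 4 := fun s => by
    have := abs_le.1 (hf2 (p + s)); have := abs_le.1 (hf2 (p - s))
    rw [abs_le]; constructor <;> linarith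
  have φ0 : φ 0 = 0 := by simp [hφ]
  have m : ∀ (ψ ψ' : ℝ → ℝ), (∀ s, HasDerivAt ψ (ψ' s) s) → (∀ s, 0 < s → 0 ≤ ψ' s) →
      ψ 0 ≤ ψ b := by
    intro ψ ψ' h1 h2
    refine monotoneOn_of_deriv_nonneg (convex_Ici 0)
      (fun s _ => (h1 s).continuousAt.continuousWithinAt)
      (fun s _ => (h1 s).differentiableAt.differentiableWithinAt) ?_ (Set.mem_Ici.2 le_rfl) hb hb
    intro s hs
    rw [interior_Ici] at hs
    rw [(h1 s).deriv]; exact h2 s hs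
  have u1 := m _ _ (fun s => (hsq s).add (hφd s)) (fun s hs => by
    nlinarith [abs_le.1 (hbd s)])
  have u2 := m _ _ (fun s => (hsq s).sub (hφd s)) (fun s hs => by
    nlinarith [abs_le.1 (hbd s)])
  simp only [Pi.add_apply, Pi.sub_apply, φ0] at u1 u2
  rw [abs_le]
  constructor <;> simp only [hφ] at u1 u2 <;> linarith

lemma trap (f f1 f2 : ℝ → ℝ) (hf : ∀ w, HasDerivAt f (f1 w) w)
    (hf1 : ∀ w, HasDerivAt f1 (f2 w) w) (hf2 : ∀ w, |f2 w| ≤ 2) (p b : ℝ) :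
    |b ^ 2 * (f1 (p + b) + f1 (p - b)) - b * (f (p + b) - f (p - b))| ≤ 2 * |b| ^ 3 := by
  have key : |f (p + b) - f (p - b) - b * (f1 (p + b) + f1 (p - b))| ≤ 2 * b ^ 2 := by
    rcases le_total 0 b with hb | hb
    · exact trap_nonneg f f1 f2 hf hf1 hf2 p b hb
    · have := trap_nonneg f f1 f2 hf hf1 hf2 p (-b) (by linarith)
      rw [← abs_neg]
      convert this using 1
      · congr 1
        simp only [sub_neg_eq_add, ← sub_eq_add_neg]; ring
      · ring
  have e : b ^ 2 * (f1 (p + b) + f1 (p - b)) - b * (f (p + b) - f (p - b))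
    = -b * (f (p + b) - f (p - b) - b * (f1 (p + b) + f1 (p - b))) := by ring
  rw [e, abs_mul, abs_neg]
  calc _ ≤ |b| * (2 * b ^ 2) := by gcongr
    _ = _ := by rw [← sq_abs]; ring

instance : IsProbabilityMeasure rademacher := ⟨by
  simp [rademacher, ENNReal.inv_two_add_inv_two]⟩

lemma rad_ae : ∀ᵐ t ∂rademacher, t ^ 2 = 1 := by
  have hm : MeasurableSet {t : ℝ | t ^ 2 = 1} := measurableSet_eq_fun (by fun_prop) (by fun_prop)
  rw [rademacher, ae_add_measure_iff]
  constructor <;> refine Measure.ae_smul_measure ?_ _ <;> rw [ae_dirac_iff hm] <;> norm_num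

lemma rad_neg : MeasurePreserving (fun t : ℝ => -t) rademacher rademacher := by
  refine ⟨measurable_neg, ?_⟩
  rw [rademacher, Measure.map_add _ _ measurable_neg, Measure.map_smul, Measure.map_smul,
    Measure.map_dirac' measurable_neg, Measure.map_dirac' measurable_neg, neg_neg, add_comm]

lemma pi_ae (d : ℕ) : ∀ᵐ ε ∂(Measure.pi fun _ : Fin d => rademacher), ∀ i, ε i ^ 2 = 1 := by
  rw [ae_all_iff]
  intro i
  exact (Measure.tendsto_eval_ae_ae (μ := fun _ : Fin d => rademacher) (i := i)).eventually rad_ae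

lemma pi_int {d : ℕ} {F : (Fin d → ℝ) → ℝ} (hF : Continuous F) :
    Integrable F (Measure.pi fun _ : Fin d => rademacher) := by
  have hK : IsCompact (Set.pi Set.univ fun _ : Fin d => Set.Icc (-1 : ℝ) 1) :=
    isCompact_univ_pi fun _ => isCompact_Icc
  have h := hF.continuousOn.integrableOn_compact (μ := Measure.pi fun _ : Fin d => rademacher) hK
  rwa [IntegrableOn, Measure.restrict_eq_self_of_ae_mem] at h
  filter_upwards [pi_ae d] with ε hε i _
  have := hε i
  constructor <;> nlinarith

lemma pi_flip {d : ℕ} (i : Fin d) {F : (Fin d → ℝ) → ℝ} (hF : Continuous F) :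
    ∫ ε, F (Function.update ε i (-ε i)) ∂(Measure.pi fun _ : Fin d => rademacher)
      = ∫ ε, F ε ∂(Measure.pi fun _ : Fin d => rademacher) := by
  have h := measurePreserving_pi (fun _ : Fin d => rademacher) (fun _ : Fin d => rademacher)
    (f := fun j => if j = i then (fun t : ℝ => -t) else id) (fun j => by
      split_ifs
      · exact rad_neg
      · exact MeasurePreserving.id _)
  have e : (fun (a : Fin d → ℝ) j => (if j = i then (fun t : ℝ => -t) else id) (a j))
      = fun ε => Function.update ε i (-ε i) := by
    funext a j
    by_cases hj : j = i
    · subst hj; simp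
    · simp [hj]
  rw [e] at h
  conv_rhs => rw [← h.map_eq]
  rw [integral_map h.measurable.aemeasurable hF.aestronglyMeasurable]

lemma term_bound {d : ℕ} (a : Fin d → ℝ) (f f1 f2 : ℝ → ℝ) (hf : ∀ w, HasDerivAt f (f1 w) w)
    (hf1 : ∀ w, HasDerivAt f1 (f2 w) w) (hf2 : ∀ w, |f2 w| ≤ 2) (i : Fin d) :
    |∫ ε, (a i ^ 2 * f1 (∑ j, a j * ε j) - a i * ε i * f (∑ j, a j * ε j))
      ∂(Measure.pi fun _ : Fin d => rademacher)| ≤ |a i| ^ 3 := by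
  have cf : Continuous f := continuous_iff_continuousAt.2 fun w => (hf w).continuousAt
  have cf1 : Continuous f1 := continuous_iff_continuousAt.2 fun w => (hf1 w).continuousAt
  set F : (Fin d → ℝ) → ℝ := fun ε =>
    a i ^ 2 * f1 (∑ j, a j * ε j) - a i * ε i * f (∑ j, a j * ε j) with hF
  have cF : Continuous F := by fun_prop
  have cG : Continuous (fun ε : Fin d → ℝ => F (Function.update ε i (-ε i))) :=
    cF.comp (continuous_id.update i (by fun_prop))
  have h2 : (∫ ε, (F ε + F (Function.update ε i (-ε i)))
      ∂(Measure.pi fun _ : Fin d => rademacher))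
      = 2 * ∫ ε, F ε ∂(Measure.pi fun _ : Fin d => rademacher) := by
    rw [integral_add (pi_int cF) (pi_int cG), pi_flip i cF]; ring
  have hb : ‖∫ ε, (F ε + F (Function.update ε i (-ε i)))
      ∂(Measure.pi fun _ : Fin d => rademacher)‖ ≤ 2 * |a i| ^ 3 := by
    refine (norm_integral_le_of_norm_le_const (C := 2 * |a i| ^ 3) ?_).trans (by simp)
    filter_upwards [pi_ae d] with ε hε
    have hs : ∑ j, a j * Function.update ε i (-ε i) j = ∑ j, a j * ε j - 2 * (a i * ε i) := by
      have : ∀ j, a j * Function.update ε i (-ε i) j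
          = a j * ε j - (if j = i then 2 * (a i * ε i) else 0) := by
        intro j
        by_cases hj : j = i
        · subst hj; simp; ring
        · simp [hj]
      simp only [this, Finset.sum_sub_distrib, Finset.sum_ite_eq', Finset.mem_univ, if_true]
    have t := trap f f1 f2 hf hf1 hf2 (∑ j, a j * ε j - a i * ε i) (a i * ε i)
    have e1 : |ε i| = 1 := by
      have := hε i
      rw [← sq_abs] at this
      nlinarith [abs_nonneg (ε i)]
    rw [abs_mul, e1, mul_one, mul_pow, hε i, mul_one] at t
    rw [Real.norm_eq_abs]
    convert t using 2
    simp only [hF, hs, Function.update_self]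
    rw [sub_add_cancel, show ∑ j, a j * ε j - a i * ε i - a i * ε i
      = ∑ j, a j * ε j - 2 * (a i * ε i) by ring]
    ring
  rw [h2, Real.norm_eq_abs, abs_mul, abs_two] at hb
  linarith

lemma unit_case {d : ℕ} (a : Fin d → ℝ) (ha : ∑ i, a i ^ 2 = 1) (h : ℝ → ℝ)
    (hd : Differentiable ℝ h) (C : ℝ) (hC : ∀ t, |h t| ≤ C) (hk : ∀ t, |deriv h t| ≤ 1) :
    |(∫ t, h t ∂(gaussianReal 0 1))
        - ∫ ε, h (∑ i, a i * ε i) ∂(Measure.pi fun _ : Fin d => rademacher)|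
      ≤ ∑ i, |a i| ^ 3 := by
  set c := ∫ t, h t ∂(gaussianReal 0 1) with hc
  have hpdf : ∀ t, gaussianPDFReal 0 1 t = (√(2 * π))⁻¹ * gE t := by
    intro t
    simp only [gaussianPDFReal, gE, NNReal.coe_one, mul_one, sub_zero]
    congr 2; ring
  have hs : (√(2 * π))⁻¹ ≠ 0 := by positivity
  have hhi : Integrable (fun t => h t * gE t) :=
    gE_int.bdd_mul (c := C) hd.continuous.aestronglyMeasurable (Filter.Eventually.of_forall hC)
  have hint : ∀ u : ℝ → ℝ, ∫ t, u t ∂(gaussianReal 0 1) = (√(2 * π))⁻¹ * ∫ t, u t * gE t := by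
    intro u
    rw [integral_gaussianReal_eq_integral_smul one_ne_zero, ← integral_const_mul]
    congr 1; funext t
    rw [hpdf, smul_eq_mul]; ring
  have h1 := hint (fun _ => 1)
  simp only [one_mul, integral_const, smul_eq_mul, mul_one, probReal_univ] at h1
  have hki : Integrable (fun t => (h t - c) * gE t) := by
    simp only [sub_mul]; exact hhi.sub (gE_int.const_mul c)
  have hk0 : ∫ t, (h t - c) * gE t = 0 := by
    simp only [sub_mul]
    rw [integral_sub hhi (gE_int.const_mul c), integral_const_mul]
    have h2 := hint h
    rw [← hc] at h2
    apply mul_left_cancel₀ hs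
    rw [mul_sub, ← h2, mul_left_comm, ← h1]; ring
  obtain ⟨f, f1, f2, hf, hf1, hf2, hst⟩ := stein_exists (fun t => h t - c) (hd.sub_const c)
    (fun t => by rw [deriv_sub_const]; exact hk t) hki hk0
  have cf : Continuous f := continuous_iff_continuousAt.2 fun w => (hf w).continuousAt
  have cf1 : Continuous f1 := continuous_iff_continuousAt.2 fun w => (hf1 w).continuousAt
  have ch := hd.continuous
  have e : ∫ ε, h (∑ i, a i * ε i) ∂(Measure.pi fun _ : Fin d => rademacher) - c
      = ∑ i, ∫ ε, (a i ^ 2 * f1 (∑ j, a j * ε j) - a i * ε i * f (∑ j, a j * ε j))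
      ∂(Measure.pi fun _ : Fin d => rademacher) := by
    rw [← integral_finsetSum _ fun i _ => pi_int (by fun_prop)]
    have : c = ∫ ε, c ∂(Measure.pi fun _ : Fin d => rademacher) := by simp
    conv_lhs => rw [this]
    rw [← integral_sub (pi_int (by fun_prop)) (integrable_const _)]
    congr 1; funext ε
    rw [hst, Finset.sum_sub_distrib, ← Finset.sum_mul, ← Finset.sum_mul, ha, one_mul]
  rw [abs_sub_comm, e]
  exact (Finset.abs_sum_le_sum_abs _ _).trans
    (Finset.sum_le_sum fun i _ => term_bound a f f1 f2 hf hf1 hf2 i)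

/-- Stein-type comparison. For nonzero `x ∈ ℝ^d`, a Gaussian `z'` with mean 0
and variance `‖x‖₂²`, and `y' = Σᵢ x(i)·dᵢ` with `dᵢ` i.i.d. Rademacher, every differentiable
`g : ℝ → ℝ` with `|g| ≤ 1` and `|g'| ≤ 1` satisfies
`|E[g(z')] − E[g(y')]| ≤ (3/2)·Σᵢ |x(i)|³/‖x‖₂²`. -/
theorem stmt_11 (d : ℕ) (x : EuclideanSpace ℝ (Fin d)) (hx : x ≠ 0)
    (g : ℝ → ℝ) (hg : Differentiable ℝ g)
    (hg1 : ∀ t, |g t| ≤ 1) (hg2 : ∀ t, |deriv g t| ≤ 1) :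
    |(∫ t, g t ∂(gaussianReal 0 (‖x‖₊ ^ 2)))
        - ∫ ε, g (∑ i, x i * ε i) ∂(Measure.pi fun _ : Fin d => rademacher)|
      ≤ 3 / 2 * ∑ i, |x i| ^ 3 / ‖x‖ ^ 2 := by
  have hσ : 0 < ‖x‖ := norm_pos_iff.2 hx
  set σ := ‖x‖ with hσd
  have hd : ∀ t, HasDerivAt (fun t => σ⁻¹ * g (σ * t)) (deriv g (σ * t)) t := by
    intro t
    have h1 : HasDerivAt (fun t => σ * t) σ t := by simpa using (hasDerivAt_id' t).const_mul σ
    refine (((hg (σ * t)).hasDerivAt.comp t h1).const_mul σ⁻¹).congr_deriv ?_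
    field_simp
  have key := unit_case (fun i => x i / σ) (by
      have := EuclideanSpace.norm_sq_eq x
      simp only [Real.norm_eq_abs, sq_abs] at this
      simp only [div_pow]
      rw [← Finset.sum_div, ← this, div_self (by positivity)]) (fun t => σ⁻¹ * g (σ * t))
    (fun t => (hd t).differentiableAt) σ⁻¹ (fun t => by
      rw [abs_mul, abs_of_pos (inv_pos.2 hσ)]
      exact mul_le_of_le_one_right (by positivity) (hg1 _))
    (fun t => by rw [(hd t).deriv]; exact hg2 _)
  have hG : gaussianReal 0 (‖x‖₊ ^ 2) = (gaussianReal 0 1).map (fun t => σ * t) := by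
    rw [gaussianReal_map_const_mul, mul_zero, mul_one]
    congr 1
  have e1 : ∫ t, g t ∂(gaussianReal 0 (‖x‖₊ ^ 2)) = ∫ t, g (σ * t) ∂(gaussianReal 0 1) := by
    rw [hG, integral_map (by fun_prop) hg.continuous.aestronglyMeasurable]
  have e2 : ∀ ε : Fin d → ℝ, σ * ∑ i, x i / σ * ε i = ∑ i, x i * ε i := by
    intro ε
    rw [Finset.mul_sum]
    refine Finset.sum_congr rfl fun i _ => ?_
    field_simp
  simp only [e2, integral_const_mul] at key
  rw [← e1, ← mul_sub, abs_mul, abs_of_pos (inv_pos.2 hσ), inv_mul_le_iff₀ hσ] at key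
  have e3 : σ * ∑ i, |x i / σ| ^ 3 = ∑ i, |x i| ^ 3 / σ ^ 2 := by
    rw [Finset.mul_sum]
    refine Finset.sum_congr rfl fun i _ => ?_
    rw [abs_div, abs_of_pos hσ]
    field_simp
  rw [e3] at key
  have : 0 ≤ ∑ i, |x i| ^ 3 / σ ^ 2 := Finset.sum_nonneg fun i _ => by positivity
  linarith
end

section
/- Let d = 2^n, let x ∈ ℝ^d, let H be the normalized Walsh–Hadamard matrix and D a random sign diagonal matrix, and set u = H·D·x. Then for every coordinate i, E[u(i)⁶] ≤ 15‖x‖₂⁶/d³. -/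
open MeasureTheory ProbabilityTheory Real

/-- The normalized Walsh–Hadamard matrix of size `2^n`: entry `(i,j)` is
`(−1)^{⟨i,j⟩}/√(2^n)` where `⟨i,j⟩` is the inner product of the binary representations of
the (0-indexed) `i` and `j`. -/
noncomputable def hadamardMatrix (n : ℕ) : Matrix (Fin (2 ^ n)) (Fin (2 ^ n)) ℝ :=
  Matrix.of fun i j =>
    (-1 : ℝ) ^ (∑ k : Fin n, ((i : ℕ).testBit k).toNat * ((j : ℕ).testBit k).toNat) /
      Real.sqrt (2 ^ n)

instance rademacher_prob : IsProbabilityMeasure rademacher := by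
  constructor
  simp [rademacher, ENNReal.inv_two_add_inv_two]

/-- product of Rademacher measures -/
noncomputable def radPi (m : ℕ) : Measure (Fin m → ℝ) := Measure.pi fun _ => rademacher

instance radPi_prob (m : ℕ) : IsProbabilityMeasure (radPi m) := by
  unfold radPi; infer_instance

lemma measurable_fcons (m : ℕ) (c : ℝ) :
    Continuous (fun e : Fin m → ℝ => (Fin.cons c e : Fin (m+1) → ℝ)) := by
  refine continuous_pi fun j => ?_
  refine Fin.cases ?_ (fun k => ?_) j
  · simpa using continuous_const
  · simpa using continuous_apply k

lemma radPi_succ (m : ℕ) : radPi (m+1) =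
    (2 : ENNReal)⁻¹ • (radPi m).map (fun e => (Fin.cons 1 e : Fin (m+1) → ℝ)) +
    (2 : ENNReal)⁻¹ • (radPi m).map (fun e => (Fin.cons (-1) e : Fin (m+1) → ℝ)) := by
  have h := (measurePreserving_piFinSuccAbove (fun _ : Fin (m+1) => rademacher) 0).symm.map_eq
  have h2 : rademacher.prod (radPi m) =
      (2 : ENNReal)⁻¹ • (radPi m).map (Prod.mk 1) +
      (2 : ENNReal)⁻¹ • (radPi m).map (Prod.mk (-1)) := by
    rw [← Measure.dirac_prod, ← Measure.dirac_prod, rademacher, Measure.add_prod,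
      Measure.prod_smul_left, Measure.prod_smul_left]
  have h3 : (rademacher.prod (Measure.pi fun j : Fin m => rademacher)) = _ := h2
  unfold radPi at *
  rw [← h, h3, Measure.map_add _ _ (MeasurableEquiv.measurable _), Measure.map_smul,
    Measure.map_smul, Measure.map_map (MeasurableEquiv.measurable _) (by fun_prop),
    Measure.map_map (MeasurableEquiv.measurable _) (by fun_prop)]
  have key : ∀ c : ℝ, (⇑(MeasurableEquiv.piFinSuccAbove (fun _ : Fin (m+1) => ℝ) 0).symm
      ∘ Prod.mk c) = (fun e => (Fin.cons c e : Fin (m+1) → ℝ)) := by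
    intro c
    funext e
    simp [MeasurableEquiv.piFinSuccAbove]
    rfl
  rw [key, key]

lemma radPi_integrable (m : ℕ) : ∀ f : (Fin m → ℝ) → ℝ, Continuous f →
    Integrable f (radPi m) := by
  induction m with
  | zero => 
    intro f hf
    have : f = fun _ => f 0 := by
      funext e; congr 1; exact Subsingleton.elim _ _
    rw [this]; exact integrable_const _
  | succ m ih =>
    intro f hf
    rw [radPi_succ]
    have key : ∀ c : ℝ, Integrable f ((2 : ENNReal)⁻¹ •
        (radPi m).map (fun e => (Fin.cons c e : Fin (m+1) → ℝ))) := by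
      intro c
      refine Integrable.smul_measure ?_ (by simp)
      rw [integrable_map_measure hf.aestronglyMeasurable
        (measurable_fcons m c).measurable.aemeasurable]
      exact ih _ (hf.comp (measurable_fcons m c))
    exact (key 1).add_measure (key (-1))

lemma radPi_integral_add (m : ℕ) (f g : (Fin m → ℝ) → ℝ) (hf : Continuous f)
    (hg : Continuous g) :
    ∫ e, (f e + g e) ∂(radPi m) = ∫ e, f e ∂(radPi m) + ∫ e, g e ∂(radPi m) :=
  integral_add (radPi_integrable m f hf) (radPi_integrable m g hg)

lemma radPi_integral_succ (m : ℕ) (f : (Fin (m+1) → ℝ) → ℝ) (hf : Continuous f) :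
    ∫ e, f e ∂(radPi (m+1)) =
      ∫ e, (f (Fin.cons 1 e) + f (Fin.cons (-1) e)) / 2 ∂(radPi m) := by
  have key : ∀ c : ℝ, Integrable f ((2 : ENNReal)⁻¹ •
        (radPi m).map (fun e => (Fin.cons c e : Fin (m+1) → ℝ))) := by
      intro c
      refine Integrable.smul_measure ?_ (by simp)
      rw [integrable_map_measure hf.aestronglyMeasurable
        (measurable_fcons m c).measurable.aemeasurable]
      exact radPi_integrable m _ (hf.comp (measurable_fcons m c))
  rw [radPi_succ, integral_add_measure (key 1) (key (-1)), integral_smul_measure,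
    integral_smul_measure, 
    integral_map (measurable_fcons m _).measurable.aemeasurable hf.aestronglyMeasurable,
    integral_map (measurable_fcons m _).measurable.aemeasurable hf.aestronglyMeasurable,
    integral_div, radPi_integral_add _ _ _ (hf.comp' (measurable_fcons m 1))
      (hf.comp' (measurable_fcons m (-1)))]
  simp
  ring

lemma radPi_moments (m : ℕ) : ∀ a : Fin m → ℝ,
    (∫ e, (∑ j, a j * e j) ^ 2 ∂(radPi m) ≤ ∑ j, a j ^ 2) ∧
    (∫ e, (∑ j, a j * e j) ^ 4 ∂(radPi m) ≤ 3 * (∑ j, a j ^ 2) ^ 2) ∧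
    (∫ e, (∑ j, a j * e j) ^ 6 ∂(radPi m) ≤ 15 * (∑ j, a j ^ 2) ^ 3) := by
  induction m with
  | zero => intro a; simp
  | succ m ih =>
    intro a
    obtain ⟨h2, h4, h6⟩ := ih (fun j => a j.succ)
    have hs : 0 ≤ ∑ j : Fin m, a j.succ ^ 2 := Finset.sum_nonneg fun _ _ => sq_nonneg _
    rw [radPi_integral_succ _ _ (by fun_prop), radPi_integral_succ _ _ (by fun_prop),
      radPi_integral_succ _ _ (by fun_prop)]
    simp only [Fin.sum_univ_succ, Fin.cons_zero, Fin.cons_succ]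
    set b := a 0
    set s := ∑ j : Fin m, a j.succ ^ 2
    have e2 : ∀ S : ℝ, ((b * 1 + S) ^ 2 + (b * -1 + S) ^ 2) / 2 = S ^ 2 + b ^ 2 := by
      intro S; ring
    have e4 : ∀ S : ℝ, ((b * 1 + S) ^ 4 + (b * -1 + S) ^ 4) / 2
        = S ^ 4 + 6 * b ^ 2 * S ^ 2 + b ^ 4 := by
      intro S; ring
    have e6 : ∀ S : ℝ, ((b * 1 + S) ^ 6 + (b * -1 + S) ^ 6) / 2
        = S ^ 6 + 15 * b ^ 2 * S ^ 4 + 15 * b ^ 4 * S ^ 2 + b ^ 6 := by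
      intro S; ring
    simp only [e2, e4, e6]
    iterate 6 rw [radPi_integral_add _ _ _ (by fun_prop) (by fun_prop)]
    simp only [integral_const_mul, integral_const, probReal_univ, one_smul]
    have hb : 0 ≤ b ^ 2 := sq_nonneg b
    refine ⟨by linarith, ?_, ?_⟩
    · nlinarith [mul_le_mul_of_nonneg_left h2 hb]
    · have := mul_le_mul_of_nonneg_left h4 hb
      have := mul_le_mul_of_nonneg_left h2 (sq_nonneg (b^2))
      have : 0 ≤ s * (b^2)^2 := by positivity
      have : 0 ≤ (b^2)^3 := by positivity
      nlinarith

lemma hadamard_sq (n : ℕ) (i j : Fin (2 ^ n)) : hadamardMatrix n i j ^ 2 = 1 / 2 ^ n := by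
  simp only [hadamardMatrix, Matrix.of_apply, div_pow]
  rw [Real.sq_sqrt (by positivity), ← pow_mul, mul_comm, pow_mul]
  simp

/-- for `d = 2^n`, `x ∈ ℝ^d`, `H` the normalized Walsh–Hadamard matrix and
`D` a random sign diagonal matrix, `u = H·D·x` satisfies `E[u(i)⁶] ≤ 15‖x‖₂⁶/d³` for every
coordinate `i`. -/
theorem stmt_13 (n : ℕ) (x : EuclideanSpace ℝ (Fin (2 ^ n))) (i : Fin (2 ^ n)) :
    (∫ ε, ((hadamardMatrix n * Matrix.diagonal ε).mulVec x i) ^ 6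
        ∂(Measure.pi fun _ : Fin (2 ^ n) => rademacher))
      ≤ 15 * ‖x‖ ^ 6 / (2 ^ n : ℝ) ^ 3 := by
  have h := (radPi_moments (2 ^ n) (fun j => hadamardMatrix n i j * x j)).2.2
  have e1 : ∀ ε : Fin (2 ^ n) → ℝ, (hadamardMatrix n * Matrix.diagonal ε).mulVec x i
      = ∑ j, hadamardMatrix n i j * x j * ε j := by
    intro ε
    simp only [Matrix.mulVec, dotProduct, Matrix.mul_diagonal]
    exact Finset.sum_congr rfl fun j _ => by ring
  simp only [e1]
  refine h.trans (le_of_eq ?_)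
  simp only [mul_pow, hadamard_sq]
  rw [← Finset.mul_sum, ← EuclideanSpace.real_norm_sq_eq]
  field_simp
end

section
/- Let d = 2^n, let z ∈ ℝ^d, let H be the normalized Walsh–Hadamard matrix, and let D_1, D_2, D_3 be any diagonal matrices with ±1 diagonal entries. Define R̃ = √d·H·diag(H·D_2·H·D_3·z), where diag(v) is the diagonal matrix with diagonal v. Then √d·H·D_1·H·D_2·H·D_3·z = R̃·vec(D_1), where vec(D_1) is the vector of diagonal entries of D_1, and every row of R̃ has Euclidean norm ‖z‖₂. -/
open MeasureTheory ProbabilityTheory Real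

lemma hadamard_entry_sq (n : ℕ) (i j : Fin (2 ^ n)) :
    (Real.sqrt (2 ^ n) * hadamardMatrix n i j) ^ 2 = 1 := by
  have h : Real.sqrt (2 ^ n) ≠ 0 := by positivity
  simp only [hadamardMatrix, Matrix.of_apply]
  rw [mul_div_cancel₀ _ h, ← pow_mul, mul_comm, pow_mul]
  simp

lemma hadamard_offdiag (n : ℕ) (j l : Fin (2 ^ n)) (hjl : j ≠ l) :
    ∑ i : Fin (2 ^ n),
      (-1 : ℝ) ^ (∑ k : Fin n, ((i : ℕ).testBit k).toNat * ((j : ℕ).testBit k).toNat) *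
      (-1 : ℝ) ^ (∑ k : Fin n, ((i : ℕ).testBit k).toNat * ((l : ℕ).testBit k).toNat) = 0 := by
  obtain ⟨k, hk⟩ : ∃ k : Fin n, (j : ℕ).testBit k ≠ (l : ℕ).testBit k := by
    by_contra! hc
    apply hjl
    apply Fin.ext
    apply Nat.eq_of_testBit_eq
    intro m
    by_cases hm : m < n
    · exact hc ⟨m, hm⟩
    · have hp : 2 ^ n ≤ 2 ^ m := Nat.pow_le_pow_right (by norm_num) (by omega)
      rw [Nat.testBit_lt_two_pow (lt_of_lt_of_le j.2 hp),
        Nat.testBit_lt_two_pow (lt_of_lt_of_le l.2 hp)]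
  have hlt : ∀ i : Fin (2 ^ n), (i : ℕ) ^^^ 2 ^ (k : ℕ) < 2 ^ n := fun i =>
    Nat.xor_lt_two_pow i.2 (Nat.pow_lt_pow_right (by norm_num) k.2)
  let g : Fin (2 ^ n) → Fin (2 ^ n) := fun i => ⟨(i : ℕ) ^^^ 2 ^ (k : ℕ), hlt i⟩
  have hg : Function.Involutive g := by
    intro i
    apply Fin.ext
    simp [g, Nat.xor_assoc]
  have key : ∀ i : Fin (2 ^ n),
      (-1 : ℝ) ^ (∑ k : Fin n, ((g i : ℕ).testBit k).toNat * ((j : ℕ).testBit k).toNat) *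
      (-1 : ℝ) ^ (∑ k : Fin n, ((g i : ℕ).testBit k).toNat * ((l : ℕ).testBit k).toNat) =
      -((-1 : ℝ) ^ (∑ k : Fin n, ((i : ℕ).testBit k).toNat * ((j : ℕ).testBit k).toNat) *
      (-1 : ℝ) ^ (∑ k : Fin n, ((i : ℕ).testBit k).toNat * ((l : ℕ).testBit k).toNat)) := by
    intro i
    have hc : (∏ m : Fin n, if m = k then (-1 : ℝ) else 1) = -1 := by simp
    have hneg : ∀ x y : ℝ, y = (∏ m : Fin n, if m = k then (-1 : ℝ) else 1) * x → y = -x := by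
      intro x y h
      rw [h, hc, neg_one_mul]
    apply hneg
    simp only [← Finset.prod_pow_eq_pow_sum, ← Finset.prod_mul_distrib]
    apply Finset.prod_congr rfl
    intro m _
    by_cases hm : m = k
    · subst hm
      simp only [g, Nat.testBit_xor, Nat.testBit_two_pow_self, if_true]
      revert hk
      cases (i : ℕ).testBit m <;> cases (j : ℕ).testBit m <;> cases (l : ℕ).testBit m <;> simp
    · have hm' : (k : ℕ) ≠ m := fun h => hm (Fin.ext h.symm)
      simp [g, Nat.testBit_xor, Nat.testBit_two_pow_of_ne hm', hm]
  have hs := Equiv.sum_comp hg.toPerm (fun i : Fin (2 ^ n) =>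
      (-1 : ℝ) ^ (∑ k : Fin n, ((i : ℕ).testBit k).toNat * ((j : ℕ).testBit k).toNat) *
      (-1 : ℝ) ^ (∑ k : Fin n, ((i : ℕ).testBit k).toNat * ((l : ℕ).testBit k).toNat))
  simp only [Function.Involutive.coe_toPerm, key, Finset.sum_neg_distrib] at hs
  linarith

lemma hadamard_orth (n : ℕ) : (hadamardMatrix n).transpose * hadamardMatrix n = 1 := by
  have h : Real.sqrt (2 ^ n) ≠ 0 := by positivity
  have hsq : Real.sqrt (2 ^ n) ^ 2 = 2 ^ n := Real.sq_sqrt (by positivity)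
  ext j l
  rw [Matrix.mul_apply]
  simp only [Matrix.transpose_apply]
  by_cases hjl : j = l
  · subst hjl
    have : ∀ i, hadamardMatrix n i j * hadamardMatrix n i j = (2 ^ n : ℝ)⁻¹ := by
      intro i
      have := hadamard_entry_sq n i j
      rw [mul_pow, hsq] at this
      rw [← pow_two]
      exact eq_inv_of_mul_eq_one_right this
    simp [this]
  · rw [Matrix.one_apply_ne hjl]
    simp only [hadamardMatrix, Matrix.of_apply, div_mul_div_comm]
    rw [← Finset.sum_div, hadamard_offdiag n j l hjl, zero_div]

lemma sum_sq_hadamard (n : ℕ) (v : Fin (2 ^ n) → ℝ) :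
    ∑ j, ((hadamardMatrix n).mulVec v j) ^ 2 = ∑ j, v j ^ 2 := by
  have : (hadamardMatrix n).mulVec v ⬝ᵥ (hadamardMatrix n).mulVec v = v ⬝ᵥ v := by
    rw [Matrix.dotProduct_mulVec, ← Matrix.mulVec_transpose, Matrix.mulVec_mulVec,
      hadamard_orth, Matrix.one_mulVec]
  simpa [dotProduct, pow_two] using this

lemma sum_sq_sign (n : ℕ) (e v : Fin (2 ^ n) → ℝ) (h : ∀ i, e i = 1 ∨ e i = -1) :
    ∑ j, ((Matrix.diagonal e).mulVec v j) ^ 2 = ∑ j, v j ^ 2 := by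
  apply Finset.sum_congr rfl
  intro j _
  rw [Matrix.mulVec_diagonal]
  rcases h j with h | h <;> simp [h]

/-- for `d = 2^n`, `z ∈ ℝ^d`, the normalized Walsh–Hadamard matrix `H` and any
±1 diagonal matrices `D₁, D₂, D₃`, setting `R̃ = √d·H·diag(H·D₂·H·D₃·z)` one has
`√d·H·D₁·H·D₂·H·D₃·z = R̃·vec(D₁)` and every row of `R̃` has Euclidean norm `‖z‖₂`. -/
theorem stmt_15 (n : ℕ) (z : EuclideanSpace ℝ (Fin (2 ^ n))) (ε₁ ε₂ ε₃ : Fin (2 ^ n) → ℝ)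
    (h1 : ∀ i, ε₁ i = 1 ∨ ε₁ i = -1) (h2 : ∀ i, ε₂ i = 1 ∨ ε₂ i = -1)
    (h3 : ∀ i, ε₃ i = 1 ∨ ε₃ i = -1) :
    Real.sqrt (2 ^ n) •
        ((hadamardMatrix n * Matrix.diagonal ε₁ * hadamardMatrix n * Matrix.diagonal ε₂ *
          hadamardMatrix n * Matrix.diagonal ε₃).mulVec z)
      = (Real.sqrt (2 ^ n) •
          (hadamardMatrix n * Matrix.diagonal
            ((hadamardMatrix n * Matrix.diagonal ε₂ * hadamardMatrix n *
              Matrix.diagonal ε₃).mulVec z))).mulVec ε₁ ∧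
    ∀ i, Real.sqrt (∑ j, ((Real.sqrt (2 ^ n) •
          (hadamardMatrix n * Matrix.diagonal
            ((hadamardMatrix n * Matrix.diagonal ε₂ * hadamardMatrix n *
              Matrix.diagonal ε₃).mulVec z))) i j) ^ 2) = ‖z‖ := by
  constructor
  · rw [Matrix.smul_mulVec]
    congr 1
    have : ∀ w : Fin (2 ^ n) → ℝ,
        (Matrix.diagonal w).mulVec ε₁ = (Matrix.diagonal ε₁).mulVec w := by
      intro w
      ext j
      simp [Matrix.mulVec_diagonal, mul_comm]
    rw [← Matrix.mulVec_mulVec (M := hadamardMatrix n), this]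
    simp only [Matrix.mulVec_mulVec, Matrix.mul_assoc]
  · intro i
    rw [EuclideanSpace.norm_eq]
    congr 1
    simp only [Matrix.smul_apply, Matrix.mul_diagonal, smul_eq_mul, ← mul_assoc]
    simp only [mul_pow (Real.sqrt (2 ^ n) * hadamardMatrix n i _), hadamard_entry_sq, one_mul]
    simp only [← Matrix.mulVec_mulVec]
    rw [sum_sq_hadamard, sum_sq_sign n _ _ h2, sum_sq_hadamard, sum_sq_sign n _ _ h3]
    simp
end
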